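/- arXiv:1705.09615 — 3 statements merged into one kernel-verified Lean document; each statement's English description precedes it below -/
import Mathlib

section
/- Let S be a free and liberal schema, p^(l) a labelled predicate of S and u a variable. (1) If there is a p^(l)u-couple I for S and μ⟨p^(l),true⟩ ∈ pre(Π(S)) for some finite word μ, then there is a pu-couple I' for S with head(I') = μ and {tail(I,k) : k ∈ I} = {tail(I',k) : k ∈ I'}. (2) In particular, if there is a p^(l)u-couple for S and S contains an Fp^(l)-path-segment for some word F of function symbols, then there is an Fp^(l)u-couple for S. -/
/-!
The tails of a couple can be transplanted to another head for three reasons.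

* In a well-labelled schema the continuations of a path after a letter `⟨p^(l), Z⟩` depend on that
  letter only, not on what precedes it (`paths_exchange`). Hence both `μ⟨p^(l),true⟩ρt` and
  `μ⟨p^(l),false⟩ρf` are complete paths, and by freeness each of them is executable separately.

* Let `d = M[μ]_e` be the state reached after an executable path `μ` of a liberal schema. Then `d`
  is injective, and no assignment executed after `μ` yields a value of `d`. So an equality between
  values computed by two continuations `ρ₁, ρ₂` from `d` can be traced back, symbol by symbol,
  to identities between variables, and therefore holds from every other starting state as well
  (`run_eq_transfer`). Applied in both directions, this says that coincidences between values along
  the two tails are the same after `head` and after `μ`.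

* Consequently a predicate term met on both tails after `μ`, other than the one at which the paths
  diverge, is also met on both tails after `head` and is not the diverging one there, so it receives
  the same truth value on both tails. The two paths can thus be run under interpretations that differ
  at the diverging predicate term only, and the final values of `u` still differ, again by transfer.

The statement about `F`-terms follows by taking `μ = aσ`, where `σ` is the given path-segment and `a`
a word leading to it: starting from `M[a]_e` instead of `e` keeps `F`-terms `F`-terms.
-/

/-!
Common formalization of program schemas (Danicic–Hierons–Laurence):
letters/paths, Herbrand semantics, freeness, liberality, subschemas,
data/control dependence, Weiser's set `Need`, slices and couples.
Function symbols, predicate symbols, variables and labels are all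
modelled by `ℕ` (function and predicate symbols kept disjoint by
construction of the syntax).
-/

namespace SchemaSlicing

/-- Letters of the alphabet Λ(S): assignment letters `y := f^(l)(args)` and
predicate letters `⟨p^(l)(args), b⟩`. -/
inductive Letter : Type
  | asn (y : ℕ) (f : ℕ) (l : ℕ) (args : List ℕ)
  | prd (p : ℕ) (l : ℕ) (args : List ℕ) (b : Bool)
  deriving DecidableEq

/-- Program schemas. -/
inductive Schema : Type
  | skip
  | assign (y : ℕ) (f : ℕ) (l : ℕ) (args : List ℕ)
  | seq (S₁ S₂ : Schema)
  | ite (p : ℕ) (l : ℕ) (args : List ℕ) (Tt Tf : Schema)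
  | whil (p : ℕ) (l : ℕ) (args : List ℕ) (body : Schema)

/-- Complete paths of a while loop iterated `n` times. -/
def whileIter (p l : ℕ) (args : List ℕ) (B : Set (List Letter)) : ℕ → Set (List Letter)
  | 0 => {[Letter.prd p l args false]}
  | n + 1 => {σ | ∃ x ∈ B, ∃ y ∈ whileIter p l args B n, σ = Letter.prd p l args true :: (x ++ y)}

/-- The set Π(S) of complete paths through a schema. -/
def Paths : Schema → Set (List Letter)
  | .skip => {[]}
  | .assign y f l args => {[Letter.asn y f l args]}
  | .seq S₁ S₂ => {σ | ∃ x ∈ Paths S₁, ∃ y ∈ Paths S₂, σ = x ++ y}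
  | .ite p l args Tt Tf =>
      {σ | (∃ x ∈ Paths Tt, σ = Letter.prd p l args true :: x) ∨
           (∃ x ∈ Paths Tf, σ = Letter.prd p l args false :: x)}
  | .whil p l args body => {σ | ∃ n, σ ∈ whileIter p l args (Paths body) n}

/-- pre(Π(S)): finite prefixes of complete paths. -/
def PrePaths (S : Schema) : Set (List Letter) := {σ | ∃ τ, σ <+: τ ∧ τ ∈ Paths S}

/-- μ is a path-segment of S. -/
def PathSegment (S : Schema) (μ : List Letter) : Prop := ∃ a b, a ++ μ ++ b ∈ Paths S

/-- μ is a terminal path-segment of S. -/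
def TerminalSegment (S : Schema) (μ : List Letter) : Prop := ∃ a, a ++ μ ∈ Paths S

/-- An interpretation over a domain `D`. -/
structure Interp (D : Type) where
  fn : ℕ → List D → D
  pr : ℕ → List D → Bool

/-- One execution step on states. -/
def stepL {D : Type} (I : Interp D) (d : ℕ → D) : Letter → (ℕ → D)
  | .asn y f _ args => Function.update d y (I.fn f (args.map d))
  | .prd _ _ _ _ => d

/-- `M[σ]^I_d`: the state after executing the assignment letters of σ from d. -/
def execP {D : Type} (I : Interp D) (d : ℕ → D) (σ : List Letter) : ℕ → D :=
  σ.foldl (stepL I) d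

/-- σ is consistent with the interpretation `I` from initial state `d`:
every predicate letter along σ is evaluated according to `I`. -/
def Agrees {D : Type} (I : Interp D) (d : ℕ → D) (σ : List Letter) : Prop :=
  ∀ τ p l args b, τ ++ [Letter.prd p l args b] <+: σ →
    I.pr p (args.map (execP I d τ)) = b

/-- σ is the (terminating) path `π_S(I,d)`. -/
def TermRun {D : Type} (S : Schema) (I : Interp D) (d : ℕ → D) (σ : List Letter) : Prop :=
  σ ∈ Paths S ∧ Agrees I d σ

/-- `M[S]^I_d ≠ ⊥`. -/
def Terminates {D : Type} (S : Schema) (I : Interp D) (d : ℕ → D) : Prop :=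
  ∃ σ, TermRun S I d σ

/-- Terms over function symbols and variables (the Herbrand domain). -/
inductive Trm : Type
  | var : ℕ → Trm
  | app : ℕ → List Trm → Trm

/-- A Herbrand interpretation is determined by its predicate part. -/
abbrev HInterp := ℕ → List Trm → Bool

/-- The Herbrand interpretation with predicate part `h`. -/
def herb (h : HInterp) : Interp Trm := ⟨Trm.app, h⟩

/-- The natural state `e`. -/
def eSt : ℕ → Trm := Trm.var

/-- `M[σ]_e`: Herbrand execution of the assignment letters of σ from e. -/
def hexec (σ : List Letter) : ℕ → Trm := execP (herb fun _ _ => false) eSt σ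

/-- σ is consistent with the Herbrand interpretation `i` from `e`. -/
def hAgrees (i : HInterp) (σ : List Letter) : Prop := Agrees (herb i) eSt σ

/-- A schema is free if every prefix of a complete path is a prefix of
`π_S(i,e)` for some Herbrand interpretation i. -/
def Free (S : Schema) : Prop := ∀ σ ∈ PrePaths S, ∃ i : HInterp, hAgrees i σ

/-- A schema is liberal if along any executable path (from `e`, under a
Herbrand interpretation) no two assignments produce the same term. -/
def Liberal (S : Schema) : Prop :=
  ∀ (i : HInterp) (μ ν : List Letter) (y f l args w g m brgs),
    (μ ++ Letter.asn y f l args :: (ν ++ [Letter.asn w g m brgs])) ∈ PrePaths S →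
    hAgrees i (μ ++ Letter.asn y f l args :: (ν ++ [Letter.asn w g m brgs])) →
    hexec (μ ++ [Letter.asn y f l args]) y ≠
      hexec (μ ++ Letter.asn y f l args :: (ν ++ [Letter.asn w g m brgs])) w

/-- Labelled symbols: labelled function symbols and labelled predicate symbols. -/
inductive LSym : Type
  | fn (f l : ℕ)
  | pr (p l : ℕ)
  deriving DecidableEq

/-- The set of labelled symbols occurring in a schema. -/
def lsymSet : Schema → Set LSym
  | .skip => ∅
  | .assign _ f l _ => {LSym.fn f l}
  | .seq a b => lsymSet a ∪ lsymSet b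
  | .ite p l _ t e => insert (LSym.pr p l) (lsymSet t ∪ lsymSet e)
  | .whil p l _ b => insert (LSym.pr p l) (lsymSet b)

/-- Number of occurrences of a labelled symbol in a schema. -/
def lsymCount : Schema → LSym → ℕ
  | .skip, _ => 0
  | .assign _ f l _, x => if x = LSym.fn f l then 1 else 0
  | .seq a b, x => lsymCount a x + lsymCount b x
  | .ite p l _ t e, x => (if x = LSym.pr p l then 1 else 0) + lsymCount t x + lsymCount e x
  | .whil p l _ b, x => (if x = LSym.pr p l then 1 else 0) + lsymCount b x

/-- Standing convention: distinct occurrences of the same symbol carry distinct labels. -/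
def WellLabelled (S : Schema) : Prop := ∀ x, lsymCount S x ≤ 1

/-- Number of occurrences of a predicate symbol in a schema. -/
def predCount : Schema → ℕ → ℕ
  | .skip, _ => 0
  | .assign _ _ _ _, _ => 0
  | .seq a b, p => predCount a p + predCount b p
  | .ite q _ _ t e, p => (if q = p then 1 else 0) + predCount t p + predCount e p
  | .whil q _ _ b, p => (if q = p then 1 else 0) + predCount b p

/-- No predicate symbol occurs more than once. -/
def PredLinear (S : Schema) : Prop := ∀ p, predCount S p ≤ 1

/-- `Occurs T S`: T occurs as a subtree (statement) of S. -/
inductive Occurs : Schema → Schema → Prop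
  | refl (S : Schema) : Occurs S S
  | seqL {S T U : Schema} : Occurs S T → Occurs S (.seq T U)
  | seqR {S T U : Schema} : Occurs S U → Occurs S (.seq T U)
  | iteT {S t e : Schema} {p l args} : Occurs S t → Occurs S (.ite p l args t e)
  | iteF {S t e : Schema} {p l args} : Occurs S e → Occurs S (.ite p l args t e)
  | whilB {S b : Schema} {p l args} : Occurs S b → Occurs S (.whil p l args b)

/-- The schema contains an assignment to the variable v. -/
def AssignsTo : Schema → ℕ → Prop
  | .skip, _ => False
  | .assign y _ _ _, v => y = v
  | .seq a b, v => AssignsTo a v ∨ AssignsTo b v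
  | .ite _ _ _ t e, v => AssignsTo t v ∨ AssignsTo e v
  | .whil _ _ _ b, v => AssignsTo b v

/-- The schema contains an assignment `v := f(...)`. -/
def AssignsWith : Schema → ℕ → ℕ → Prop
  | .skip, _, _ => False
  | .assign y g _ _, f, v => g = f ∧ y = v
  | .seq a b, f, v => AssignsWith a f v ∨ AssignsWith b f v
  | .ite _ _ _ t e, f, v => AssignsWith t f v ∨ AssignsWith e f v
  | .whil _ _ _ b, f, v => AssignsWith b f v

/-- If a function symbol occurs in assignments in both parts of an if
predicate, then those assignments assign to distinct variables. -/
def IfPartsCondition (S : Schema) : Prop :=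
  ∀ p l args t e, Occurs (Schema.ite p l args t e) S →
    ∀ f v, AssignsWith t f v → AssignsWith e f v → False

/-- Special schemas: (well-labelled,) predicate-linear, free, liberal,
satisfying the condition on the two parts of each if predicate. -/
def Special (S : Schema) : Prop :=
  WellLabelled S ∧ PredLinear S ∧ Free S ∧ Liberal S ∧ IfPartsCondition S

/-- `Subschema T S`: T is obtained from S by deleting statements. -/
inductive Subschema : Schema → Schema → Prop
  | skip (S : Schema) : Subschema .skip S
  | refl (S : Schema) : Subschema S S
  | seqL (S₁ S₂ : Schema) : Subschema S₁ (.seq S₁ S₂)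
  | seqR (S₁ S₂ : Schema) : Subschema S₂ (.seq S₁ S₂)
  | seqCongrL {S' S : Schema} (T : Schema) :
      Subschema S' S → Subschema (.seq S' T) (.seq S T)
  | seqCongrR {T' T : Schema} (S : Schema) :
      Subschema T' T → Subschema (.seq S T') (.seq S T)
  | whilCongr {T' T : Schema} (p l : ℕ) (args : List ℕ) :
      Subschema T' T → Subschema (.whil p l args T') (.whil p l args T)
  | iteCongrT {T' T : Schema} (p l : ℕ) (args : List ℕ) (E : Schema) :
      Subschema T' T → Subschema (.ite p l args T' E) (.ite p l args T E)
  | iteCongrF {E' E : Schema} (p l : ℕ) (args : List ℕ) (T : Schema) :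
      Subschema E' E → Subschema (.ite p l args T E') (.ite p l args T E)
  | trans {A B C : Schema} : Subschema A B → Subschema B C → Subschema A C

/-- T is a u-slice of S (u a variable): over every domain, state and
interpretation, if S terminates then T terminates with the same final value of u. -/
def IsUSlice (S T : Schema) (u : ℕ) : Prop :=
  ∀ (D : Type) (I : Interp D) (d : ℕ → D),
    Terminates S I d →
      Terminates T I d ∧
      ∀ σ τ, TermRun S I d σ → TermRun T I d τ → execP I d σ u = execP I d τ u

/-- T is an ω-slice of S: S and T have the same termination behaviour. -/
def IsOmegaSlice (S T : Schema) : Prop :=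
  ∀ (D : Type) (I : Interp D) (d : ℕ → D), Terminates S I d ↔ Terminates T I d

/-- `IsFTrm F t`: t is an F-term, for a (nonempty) word F of function symbols. -/
inductive IsFTrm : List ℕ → Trm → Prop
  | base (f : ℕ) (ts : List Trm) : IsFTrm [f] (.app f ts)
  | step {F : List ℕ} {t : Trm} (g : ℕ) {ts : List Trm} :
      t ∈ ts → IsFTrm F t → IsFTrm (F ++ [g]) (.app g ts)

/-- `IsVFTrm v F t`: t is a vF-term. -/
inductive IsVFTrm (v : ℕ) : List ℕ → Trm → Prop
  | base : IsVFTrm v [] (.var v)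
  | step {F : List ℕ} {t : Trm} (g : ℕ) {ts : List Trm} :
      t ∈ ts → IsVFTrm v F t → IsVFTrm v (F ++ [g]) (.app g ts)

/-- The function symbol f occurs in the term t. -/
inductive OccIn (f : ℕ) : Trm → Prop
  | here (ts : List Trm) : OccIn f (.app f ts)
  | there {g : ℕ} {ts : List Trm} {t : Trm} : t ∈ ts → OccIn f t → OccIn f (.app g ts)

/-- Labelled terms: applications additionally record the label of the
assignment that created them. -/
inductive LTrm : Type
  | var : ℕ → LTrm
  | app : ℕ → ℕ → List LTrm → LTrm

def lStep (d : ℕ → LTrm) : Letter → (ℕ → LTrm)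
  | .asn y f l args => Function.update d y (LTrm.app f l (args.map d))
  | .prd _ _ _ _ => d

/-- Labelled Herbrand execution from e. -/
def lexec (σ : List Letter) : ℕ → LTrm := σ.foldl lStep LTrm.var

/-- F-terms for words F of labelled function symbols. -/
inductive IsFLTrm : List (ℕ × ℕ) → LTrm → Prop
  | base (f l : ℕ) (ts : List LTrm) : IsFLTrm [(f, l)] (.app f l ts)
  | step {F : List (ℕ × ℕ)} {t : LTrm} (g m : ℕ) {ts : List LTrm} :
      t ∈ ts → IsFLTrm F t → IsFLTrm (F ++ [(g, m)]) (.app g m ts)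

/-- `f^(l) ⤳ u` for a variable u. -/
def DepFV (S : Schema) (fl : ℕ × ℕ) (u : ℕ) : Prop :=
  ∃ σ, TerminalSegment S σ ∧ IsFLTrm [fl] (lexec σ u)

/-- `f^(l) ⤳ g^(m)` for labelled function symbols. -/
def DepFF (S : Schema) (fl gm : ℕ × ℕ) : Prop :=
  ∃ σ, PathSegment S σ ∧ ∃ w, IsFLTrm [fl, gm] (lexec σ w)

/-- `f^(l) ⤳ q^(m)` for a labelled predicate. -/
def DepFP (S : Schema) (fl : ℕ × ℕ) (q m : ℕ) : Prop :=
  ∃ σ args Z, PathSegment S (σ ++ [Letter.prd q m args Z]) ∧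
    ∃ w ∈ args, IsFLTrm [fl] (lexec σ w)

/-- `f^(l) ⤳ x` for a labelled symbol x. -/
def DepFX (S : Schema) (fl : ℕ × ℕ) : LSym → Prop
  | .fn g m => DepFF S fl (g, m)
  | .pr q m => DepFP S fl q m

/-- The labelled predicate `p^(l)` controls the labelled symbol x in S. -/
def ControlsL (S : Schema) (p l : ℕ) (x : LSym) : Prop :=
  (∃ args t e, Occurs (Schema.ite p l args t e) S ∧ (x ∈ lsymSet t ∨ x ∈ lsymSet e)) ∨
  (∃ args b, Occurs (Schema.whil p l args b) S ∧ x ∈ lsymSet b)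

/-- `p^(l)` is a while predicate of S. -/
def IsWhilePred (S : Schema) (p l : ℕ) : Prop :=
  ∃ args b, Occurs (Schema.whil p l args b) S

/-- Slicing criteria: a variable, or termination (ω). -/
inductive Crit : Type
  | var : ℕ → Crit
  | omega

/-- Weiser's labelled symbol set `Need_S(u)`. -/
inductive Need (S : Schema) : Crit → LSym → Prop
  | ofVar {v f l : ℕ} : DepFV S (f, l) v → Need S (.var v) (.fn f l)
  | ofOmega {p l : ℕ} : IsWhilePred S p l → Need S .omega (.pr p l)
  | ofDep {u : Crit} {f l : ℕ} {x : LSym} :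
      Need S u x → DepFX S (f, l) x → Need S u (.fn f l)
  | ofControl {u : Crit} {p l : ℕ} {x : LSym} :
      Need S u x → ControlsL S p l x → Need S u (.pr p l)

/-- `{i,j}` is a p(ts)-couple: i and j differ at the predicate term p(ts)
and agree on every other predicate term. -/
def PTCouple (p : ℕ) (ts : List Trm) (i j : HInterp) : Prop :=
  i p ts ≠ j p ts ∧ ∀ q ss, (q, ss) ≠ (p, ts) → i q ss = j q ss

/-- `{i,j}` is a p(ts)u-couple for S. -/
def PTUCouple (S : Schema) (p : ℕ) (ts : List Trm) (u : ℕ) (i j : HInterp) : Prop :=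
  PTCouple p ts i j ∧
  ∃ σ τ, TermRun S (herb i) eSt σ ∧ TermRun S (herb j) eSt τ ∧ hexec σ u ≠ hexec τ u

/-- `{i,j}` is a pu-couple for S. -/
def PUCouple (S : Schema) (p u : ℕ) (i j : HInterp) : Prop :=
  ∃ ts, PTUCouple S p ts u i j

/-- `{i,j}` is a pω-couple for S: a p-couple such that exactly one of the
two runs terminates. -/
def POmegaCouple (S : Schema) (p : ℕ) (i j : HInterp) : Prop :=
  ∃ ts, PTCouple p ts i j ∧
    Xor' (Terminates S (herb i) eSt) (Terminates S (herb j) eSt)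

/-- A `p^(l)u`-couple for S presented with its divergence data: the common
prefix `head` (the head of the couple), the argument vector of `p^(l)` at the
divergence point, and the two tails. -/
def LPUCoupleData (S : Schema) (p l u : ℕ) (i j : HInterp)
    (head : List Letter) (args : List ℕ) (ρt ρf : List Letter) : Prop :=
  PTCouple p (args.map (hexec head)) i j ∧
  TermRun S (herb i) eSt (head ++ Letter.prd p l args true :: ρt) ∧
  TermRun S (herb j) eSt (head ++ Letter.prd p l args false :: ρf) ∧
  hexec (head ++ Letter.prd p l args true :: ρt) u ≠
    hexec (head ++ Letter.prd p l args false :: ρf) u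

/-- A (p,X)-link in S. -/
def PLink (S : Schema) (p : ℕ) (X : Bool) (ν : List Letter) : Prop :=
  (∃ l args t e, Occurs (Schema.ite p l args t e) S ∧
     ∃ π ∈ Paths (if X then t else e), ν = Letter.prd p l args X :: π) ∨
  (∃ l args b, Occurs (Schema.whil p l args b) S ∧
     ((X = false ∧ ν = [Letter.prd p l args false]) ∨
      (X = true ∧ ∃ π ∈ Paths b, ∃ ρ ∈ Paths (Schema.whil p l args b),
        ν = Letter.prd p l args true :: (π ++ ρ))))

/-- The path-segment μ v-feeds p to q in S. -/
def VFeeds (S : Schema) (v p q : ℕ) (μ : List Letter) : Prop :=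
  ∃ X ν, PLink S p X ν ∧ ∃ m args, PathSegment S (ν ++ μ ++ [Letter.prd q m args true]) ∧
    ∃ w ∈ args, ∃ F, IsVFTrm v F (hexec μ w)

/-- There is an assignment to v in the body (while) or in the true or
false part (if) of the predicate p in S. -/
def AssignInPart (S : Schema) (p v : ℕ) : Prop :=
  (∃ l args t e, Occurs (Schema.ite p l args t e) S ∧ (AssignsTo t v ∨ AssignsTo e v)) ∨
  (∃ l args b, Occurs (Schema.whil p l args b) S ∧ AssignsTo b v)

/-- The (unlabelled) symbol of a letter (function symbols and predicate
symbols kept disjoint via a sum). -/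
def symOf : Letter → Sum ℕ ℕ
  | .asn _ f _ _ => .inl f
  | .prd p _ _ _ => .inr p

/-- The labelled symbol of a letter. -/
def lsymOf : Letter → LSym
  | .asn _ f l _ => .fn f l
  | .prd p l _ _ => .pr p l

/-- The vector of variables referenced by a letter. -/
def refsOf : Letter → List ℕ
  | .asn _ _ _ args => args
  | .prd _ _ args _ => args

/-- Statements of predicate-free schemas. -/
inductive PFStmt : Type
  | skip
  | asn (y : ℕ) (f : ℕ) (args : List ℕ)
  deriving DecidableEq

/-- A predicate-free schema is a finite sequence of skips and assignments. -/
abbrev PFS := List PFStmt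

def pfStep (d : ℕ → Trm) : PFStmt → (ℕ → Trm)
  | .skip => d
  | .asn y f args => Function.update d y (Trm.app f (args.map d))

/-- Execution of a predicate-free schema from a state d. -/
def pfExecFrom (d : ℕ → Trm) (U : PFS) : ℕ → Trm := U.foldl pfStep d

/-- `M[U]_e` for a predicate-free schema. -/
def pfExec (U : PFS) : ℕ → Trm := pfExecFrom eSt U

/-- A predicate-free schema is liberal: executed from e, no two of its
assignments produce equal term values. -/
def PFLiberal (U : PFS) : Prop :=
  ∀ A y f args B w g brgs C,
    U = A ++ PFStmt.asn y f args :: (B ++ PFStmt.asn w g brgs :: C) →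
    pfExec (A ++ [PFStmt.asn y f args]) y ≠
      pfExec (A ++ PFStmt.asn y f args :: (B ++ [PFStmt.asn w g brgs])) w

end SchemaSlicing

namespace SchemaSlicing

/-! ### Exchanging continuations of paths -/

/-- A marked letter of a concatenation lies in one of its two parts. -/
lemma append_cons_split {α : Type*} {a ρ x y : List α} {L : α} (h : a ++ L :: ρ = x ++ y) :
    (∃ c, x = a ++ L :: c ∧ ρ = c ++ y) ∨ (∃ c, a = x ++ c ∧ y = c ++ L :: ρ) := by
  rcases List.append_eq_append_iff.1 h with ⟨c, rfl, hc⟩ | ⟨c, rfl, hc⟩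
  · cases c with
    | nil => exact Or.inr ⟨[], by simp, by simpa using hc.symm⟩
    | cons b c =>
      simp only [List.cons_append, List.cons.injEq] at hc
      obtain ⟨rfl, rfl⟩ := hc
      exact Or.inl ⟨c, rfl, rfl⟩
  · exact Or.inr ⟨c, rfl, hc⟩

lemma whil_nil {q m : ℕ} {ar : List ℕ} {B : Schema} :
    [Letter.prd q m ar false] ∈ Paths (.whil q m ar B) := by
  simp only [Paths]
  exact ⟨0, rfl⟩

lemma whil_cons {q m : ℕ} {ar : List ℕ} {B : Schema} {x y : List Letter} (hx : x ∈ Paths B)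
    (hy : y ∈ Paths (.whil q m ar B)) :
    Letter.prd q m ar true :: (x ++ y) ∈ Paths (.whil q m ar B) := by
  simp only [Paths] at hy ⊢
  obtain ⟨n, hn⟩ := hy
  exact ⟨n + 1, x, hx, y, hn, rfl⟩

/-- A marked letter of a path through a loop is either a guard letter or lies in one passage through
the body. In both cases the part before that guard, respectively before that passage, may be
continued by any path through the loop. -/
lemma whil_split {q m : ℕ} {ar : List ℕ} {B : Schema} {L : Letter} :
    ∀ {a ρ : List Letter}, a ++ L :: ρ ∈ Paths (.whil q m ar B) →
    ((∃ Z, L = Letter.prd q m ar Z) ∧ L :: ρ ∈ Paths (.whil q m ar B) ∧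
      ∀ w ∈ Paths (.whil q m ar B), a ++ w ∈ Paths (.whil q m ar B)) ∨
    (∃ a0 x1 x2 y, a = a0 ++ Letter.prd q m ar true :: x1 ∧ ρ = x2 ++ y ∧
      x1 ++ L :: x2 ∈ Paths B ∧ y ∈ Paths (.whil q m ar B) ∧
      ∀ w ∈ Paths (.whil q m ar B), a0 ++ w ∈ Paths (.whil q m ar B)) := by
  intro a ρ h
  have h' := h
  simp only [Paths] at h
  obtain ⟨n, hn⟩ := h
  induction n generalizing a with
  | zero =>
    cases a with
    | nil =>
      simp only [whileIter, List.nil_append, Set.mem_singleton_iff, List.cons.injEq] at hn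
      exact Or.inl ⟨⟨false, hn.1⟩, by simpa using h', by simp⟩
    | cons b a => simp [whileIter] at hn
  | succ n ih =>
    obtain ⟨x, hx, y, hy, he⟩ := hn
    have hyW : y ∈ Paths (.whil q m ar B) := by
      simp only [Paths]
      exact ⟨n, hy⟩
    cases a with
    | nil =>
      simp only [List.nil_append, List.cons.injEq] at he
      exact Or.inl ⟨⟨true, he.1⟩, by simpa using h', by simp⟩
    | cons b a =>
      simp only [List.cons_append, List.cons.injEq] at he
      obtain ⟨rfl, he⟩ := he
      rcases append_cons_split he with ⟨c, rfl, rfl⟩ | ⟨c, rfl, rfl⟩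
      · exact Or.inr ⟨[], a, c, y, rfl, rfl, hx, hyW, by simp⟩
      · rcases ih hyW hy with ⟨hL, hp, hw⟩ | ⟨a0, x1, x2, y', rfl, rfl, hB, hy', hw⟩
        · refine Or.inl ⟨hL, hp, fun w hww => ?_⟩
          have := whil_cons hx (hw w hww)
          simpa using this
        · refine Or.inr ⟨Letter.prd q m ar true :: (x ++ a0), x1, x2, y', by simp, rfl, hB, hy',
            fun w hww => ?_⟩
          have := whil_cons hx (hw w hww)
          simpa using this

lemma count_pos {p l : ℕ} {args : List ℕ} {Z : Bool} :
    ∀ {S : Schema} {a ρ : List Letter}, a ++ Letter.prd p l args Z :: ρ ∈ Paths S →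
      1 ≤ lsymCount S (.pr p l) := by
  intro S
  induction S with
  | skip => intro a ρ h; simp [Paths] at h
  | assign y f l args =>
    intro a ρ h
    cases a <;> simp [Paths] at h
  | seq S₁ S₂ ih₁ ih₂ =>
    rintro a ρ ⟨x, hx, y, hy, he⟩
    simp only [lsymCount]
    rcases append_cons_split he with ⟨c, rfl, rfl⟩ | ⟨c, rfl, rfl⟩
    · have := ih₁ hx; omega
    · have := ih₂ hy; omega
  | ite q m ar T E ih₁ ih₂ =>
    rintro a ρ (⟨x, hx, he⟩ | ⟨x, hx, he⟩)
    all_goals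
      simp only [lsymCount]
      cases a with
      | nil =>
        simp only [List.nil_append, List.cons.injEq, Letter.prd.injEq] at he
        simp [he.1.1, he.1.2.1]
        omega
      | cons b a =>
        simp only [List.cons_append, List.cons.injEq] at he
        obtain ⟨-, rfl⟩ := he
        first
          | have := ih₁ hx; omega
          | have := ih₂ hx; omega
  | whil q m ar B ih =>
    intro a ρ h
    simp only [lsymCount]
    rcases whil_split h with ⟨⟨Z', hL⟩, -, -⟩ | ⟨a0, x1, x2, y, -, -, hB, -, -⟩
    · simp only [Letter.prd.injEq] at hL
      simp [hL.1, hL.2.1]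
    · have := ih hB; omega

/-- In a schema where `p^(l)` occurs at most once, whatever may follow a letter `⟨p^(l), Z⟩` on one
path may follow it after any word that leads to `p^(l)`. -/
lemma paths_exchange {p l : ℕ} :
    ∀ {S : Schema}, lsymCount S (.pr p l) ≤ 1 → ∀ {a ρ args Z a' ρ' args' Z'},
      a ++ Letter.prd p l args Z :: ρ ∈ Paths S →
      a' ++ Letter.prd p l args' Z' :: ρ' ∈ Paths S →
      args' = args ∧ a' ++ Letter.prd p l args Z :: ρ ∈ Paths S := by
  intro S
  induction S with
  | skip => intro _ a ρ args Z a' ρ' args' Z' h; simp [Paths] at h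
  | assign y f l args =>
    intro _ a ρ args Z a' ρ' args' Z' h
    cases a <;> simp [Paths] at h
  | seq S₁ S₂ ih₁ ih₂ =>
    intro hc a ρ args Z a' ρ' args' Z'
    rintro ⟨x, hx, y, hy, he⟩ ⟨x', hx', y', hy', he'⟩
    simp only [lsymCount] at hc
    rcases append_cons_split he with ⟨c, rfl, rfl⟩ | ⟨c, rfl, rfl⟩ <;>
    rcases append_cons_split he' with ⟨c', rfl, rfl⟩ | ⟨c', rfl, rfl⟩
    · obtain ⟨h1, h2⟩ := ih₁ (by omega) hx hx'
      exact ⟨h1, _, h2, y, hy, by simp⟩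
    · have := count_pos hx
      have := count_pos hy'
      omega
    · have := count_pos hy
      have := count_pos hx'
      omega
    · obtain ⟨h1, h2⟩ := ih₂ (by omega) hy hy'
      exact ⟨h1, _, hx', _, h2, by simp⟩
  | ite q m ar T E ih₁ ih₂ =>
    intro hc a ρ args Z a' ρ' args' Z' h h'
    simp only [lsymCount] at hc
    cases a with
    | nil =>
      cases a' with
      | nil =>
        refine ⟨?_, h⟩
        rcases h with ⟨x, hx, he⟩ | ⟨x, hx, he⟩ <;> rcases h' with ⟨x', hx', he'⟩ | ⟨x', hx', he'⟩ <;>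
          simp at he he' <;> simp [he, he']
      | cons b a' =>
        exfalso
        have hg : LSym.pr p l = LSym.pr q m := by
          rcases h with ⟨x, hx, he⟩ | ⟨x, hx, he⟩ <;> simp at he <;> simp [he]
        rw [if_pos hg] at hc
        rcases h' with ⟨x', hx', he'⟩ | ⟨x', hx', he'⟩ <;>
          simp only [List.cons_append, List.cons.injEq] at he' <;> obtain ⟨-, rfl⟩ := he' <;>
          have := count_pos hx' <;> omega
    | cons b a =>
      cases a' with
      | nil =>
        exfalso
        have hg : LSym.pr p l = LSym.pr q m := by
          rcases h' with ⟨x, hx, he⟩ | ⟨x, hx, he⟩ <;> simp at he <;> simp [he]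
        rw [if_pos hg] at hc
        rcases h with ⟨x', hx', he'⟩ | ⟨x', hx', he'⟩ <;>
          simp only [List.cons_append, List.cons.injEq] at he' <;> obtain ⟨-, rfl⟩ := he' <;>
          have := count_pos hx' <;> omega
      | cons b' a' =>
        rcases h with ⟨x, hx, he⟩ | ⟨x, hx, he⟩ <;> rcases h' with ⟨x', hx', he'⟩ | ⟨x', hx', he'⟩ <;>
          simp only [List.cons_append, List.cons.injEq] at he he' <;>
          obtain ⟨rfl, rfl⟩ := he <;> obtain ⟨rfl, rfl⟩ := he'
        · obtain ⟨h1, h2⟩ := ih₁ (by omega) hx hx'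
          exact ⟨h1, Or.inl ⟨_, h2, rfl⟩⟩
        · have := count_pos hx
          have := count_pos hx'
          omega
        · have := count_pos hx
          have := count_pos hx'
          omega
        · obtain ⟨h1, h2⟩ := ih₂ (by omega) hx hx'
          exact ⟨h1, Or.inr ⟨_, h2, rfl⟩⟩
  | whil q m ar B ih =>
    intro hc a ρ args Z a' ρ' args' Z' h h'
    simp only [lsymCount] at hc
    rcases whil_split h with ⟨⟨Z1, hL⟩, hp, -⟩ | ⟨a0, x1, x2, y, rfl, rfl, hB, hy, -⟩ <;>
    rcases whil_split h' with ⟨⟨Z2, hL'⟩, -, hw⟩ | ⟨a0', x1', x2', y', rfl, rfl, hB', hy', hw⟩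
    · simp only [Letter.prd.injEq] at hL hL'
      exact ⟨by rw [hL.2.2.1, hL'.2.2.1], hw _ hp⟩
    · exfalso
      simp only [Letter.prd.injEq] at hL
      rw [if_pos (by rw [hL.1, hL.2.1])] at hc
      have := count_pos hB'
      omega
    · exfalso
      simp only [Letter.prd.injEq] at hL'
      rw [if_pos (by rw [hL'.1, hL'.2.1])] at hc
      have := count_pos hB
      omega
    · obtain ⟨h1, h2⟩ := ih (by omega) hB hB'
      refine ⟨h1, ?_⟩
      have := hw _ (whil_cons h2 hy)
      simpa using this

/-! ### Symbolic execution from an arbitrary state -/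

/-- Herbrand execution of the assignment letters of `ρ` from the state `d`. -/
def run (d : ℕ → Trm) (ρ : List Letter) : ℕ → Trm := execP (herb fun _ _ => false) d ρ

lemma run_snoc_asn (d : ℕ → Trm) (ρ : List Letter) (y f l : ℕ) (args : List ℕ) :
    run d (ρ ++ [Letter.asn y f l args]) =
      Function.update (run d ρ) y (Trm.app f (args.map (run d ρ))) := by
  simp [run, execP, stepL, herb]

lemma run_snoc_prd (d : ℕ → Trm) (ρ : List Letter) (p l : ℕ) (args : List ℕ) (b : Bool) :
    run d (ρ ++ [Letter.prd p l args b]) = run d ρ := by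
  simp [run, execP, stepL]

lemma run_append (d : ℕ → Trm) (μ ρ : List Letter) : run d (μ ++ ρ) = run (run d μ) ρ := by
  simp [run, execP]

lemma hexec_append (μ ρ : List Letter) : hexec (μ ++ ρ) = run (hexec μ) ρ :=
  run_append eSt μ ρ

lemma hexec_append_prd (μ ρ : List Letter) (p l : ℕ) (args : List ℕ) (b : Bool) :
    hexec (μ ++ Letter.prd p l args b :: ρ) = run (hexec μ) ρ := by
  simp [hexec, run, execP, stepL]

lemma execP_herb (i : HInterp) (σ : List Letter) : execP (herb i) eSt σ = hexec σ := by
  have : stepL (herb i) = stepL (herb fun _ _ => false) := by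
    funext d L
    cases L <;> rfl
  simp [hexec, execP, this]

/-- `ρ` is fresh over the state `d`: no assignment executed along `ρ` from `d` yields a value that
some variable has in `d`. -/
def FreshOver (d : ℕ → Trm) (ρ : List Letter) : Prop :=
  ∀ ρ' y f l args v, ρ' ++ [Letter.asn y f l args] <+: ρ →
    d v ≠ run d (ρ' ++ [Letter.asn y f l args]) y

lemma FreshOver.mono {d : ℕ → Trm} {ρ ρ' : List Letter} (h : FreshOver d ρ) (hp : ρ' <+: ρ) :
    FreshOver d ρ' :=
  fun _ _ _ _ _ _ h' => h _ _ _ _ _ _ (h'.trans hp)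

lemma map_eq_map_of_imp {α β γ δ : Type*} {f : α → γ} {g : β → γ} {f' : α → δ} {g' : β → δ}
    (H : ∀ x y, f x = g y → f' x = g' y) :
    ∀ {a : List α} {b : List β}, a.map f = b.map g → a.map f' = b.map g'
  | [], [], _ => rfl
  | [], _ :: _, h => by simp at h
  | _ :: _, [], h => by simp at h
  | x :: a, y :: b, h => by
    simp only [List.map_cons, List.cons.injEq] at h ⊢
    exact ⟨H _ _ h.1, map_eq_map_of_imp H h.2⟩

/-- The value of a variable after `ρ` is its initial value, or was produced by an assignment in `ρ`;
which of the two, and by which assignment, does not depend on the starting state `d'`. -/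
lemma run_value (ρ : List Letter) (v : ℕ) :
    (∀ d', run d' ρ v = d' v) ∨
    ∃ ρ' f l args, ρ' ++ [Letter.asn v f l args] <+: ρ ∧
      ∀ d', run d' ρ v = Trm.app f (args.map (run d' ρ')) := by
  induction ρ using List.reverseRecOn with
  | nil => exact Or.inl fun _ => rfl
  | append_singleton ρ L ih =>
    have step : (∀ d', run d' (ρ ++ [L]) v = run d' ρ v) →
        (∀ d', run d' (ρ ++ [L]) v = d' v) ∨
        ∃ ρ' f l args, ρ' ++ [Letter.asn v f l args] <+: ρ ++ [L] ∧
          ∀ d', run d' (ρ ++ [L]) v = Trm.app f (args.map (run d' ρ')) := by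
      intro h
      rcases ih with h0 | ⟨ρ', f, l, args, hp, h1⟩
      · exact Or.inl fun d' => (h d').trans (h0 d')
      · exact Or.inr ⟨ρ', f, l, args, hp.trans (List.prefix_append _ _),
          fun d' => (h d').trans (h1 d')⟩
    cases L with
    | prd p l args b => exact step fun d' => by rw [run_snoc_prd]
    | asn y f l args =>
      by_cases hy : v = y
      · subst hy
        exact Or.inr ⟨ρ, f, l, args, List.prefix_rfl, fun d' => by rw [run_snoc_asn]; simp⟩
      · exact step fun d' => by rw [run_snoc_asn, Function.update_of_ne hy]

/-- An equality between values computed from an injective state `d` by two words fresh over `d`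
persists when `d` is replaced by any other state. -/
lemma run_eq_transfer {d d' : ℕ → Trm} (hd : Function.Injective d) :
    ∀ (n : ℕ) (ρ₁ ρ₂ : List Letter), ρ₁.length ≤ n → FreshOver d ρ₁ → FreshOver d ρ₂ →
      ∀ v w, run d ρ₁ v = run d ρ₂ w → run d' ρ₁ v = run d' ρ₂ w := by
  intro n
  induction n with
  | zero =>
    intro ρ₁ ρ₂ hn _ h₂ v w h
    obtain rfl : ρ₁ = [] := by simpa using hn
    rcases run_value ρ₂ w with h0 | ⟨ρ', f, l, args, hp, h1⟩
    · rw [h0] at h ⊢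
      rw [hd (show d v = d w from h)]
      rfl
    · exact absurd (by rw [run_snoc_asn, Function.update_self, ← h1]; exact h) (h₂ _ _ _ _ _ v hp)
  | succ n ih =>
    intro ρ₁ ρ₂ hn h₁ h₂ v w h
    rcases run_value ρ₁ v with h0 | ⟨ρ', f, l, args, hp, h1⟩ <;>
    rcases run_value ρ₂ w with h0' | ⟨ρ'', g, m, brgs, hp', h1'⟩
    · rw [h0, h0'] at h ⊢
      rw [hd h]
    · refine absurd ?_ (h₂ _ _ _ _ _ v hp')
      rw [run_snoc_asn, Function.update_self, ← h1', ← h, h0]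
    · refine absurd ?_ (h₁ _ _ _ _ _ w hp)
      rw [run_snoc_asn, Function.update_self, ← h1, h, h0']
    · rw [h1, h1'] at h ⊢
      simp only [Trm.app.injEq] at h ⊢
      refine ⟨h.1, map_eq_map_of_imp (fun x y hxy => ?_) h.2⟩
      have hlen := hp.length_le
      simp only [List.length_append, List.length_singleton] at hlen
      exact ih ρ' ρ'' (by omega) (h₁.mono ((List.prefix_append _ _).trans hp))
        (h₂.mono ((List.prefix_append _ _).trans hp')) x y hxy

/-- Starting from an arbitrary state instead of `e` amounts to a substitution in the computed terms,
which keeps `F`-terms `F`-terms. -/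
lemma IsFTrm.run_of_eSt (d : ℕ → Trm) :
    ∀ (n : ℕ) (ρ : List Letter) (w : ℕ) (F : List ℕ), ρ.length ≤ n →
      IsFTrm F (run eSt ρ w) → IsFTrm F (run d ρ w) := by
  intro n
  induction n with
  | zero =>
    intro ρ w F hn h
    obtain rfl : ρ = [] := by simpa using hn
    change IsFTrm F (Trm.var w) at h
    cases h
  | succ n ih =>
    intro ρ w F hn h
    rcases run_value ρ w with h0 | ⟨ρ', f, l, args, hp, h1⟩
    · rw [h0] at h
      change IsFTrm F (Trm.var w) at h
      cases h
    · rw [h1] at h ⊢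
      have hlen := hp.length_le
      simp only [List.length_append, List.length_singleton] at hlen
      cases h with
      | base => exact .base _ _
      | step g ht hF =>
        obtain ⟨x, hx, rfl⟩ := List.mem_map.1 ht
        exact .step _ (List.mem_map.2 ⟨x, hx, rfl⟩) (ih ρ' x _ (by omega) hF)

/-! ### Consequences of freeness and liberality -/

/-- No two assignments along `σ`, executed from `e`, yield the same term. -/
def LibWord (σ : List Letter) : Prop :=
  ∀ μ ν y f l args w g m brgs,
    μ ++ Letter.asn y f l args :: (ν ++ [Letter.asn w g m brgs]) <+: σ →
    hexec (μ ++ [Letter.asn y f l args]) y ≠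
      hexec (μ ++ Letter.asn y f l args :: (ν ++ [Letter.asn w g m brgs])) w

lemma libWord_of_path {S : Schema} (hF : Free S) (hL : Liberal S) {σ : List Letter}
    (hσ : σ ∈ Paths S) : LibWord σ := by
  intro μ ν y f l args w g m brgs hp
  obtain ⟨i, hi⟩ := hF σ ⟨σ, List.prefix_rfl, hσ⟩
  exact hL i μ ν y f l args w g m brgs ⟨σ, hp, hσ⟩ fun τ p l args b h => hi τ p l args b (h.trans hp)

lemma LibWord.mono {σ τ : List Letter} (h : LibWord σ) (hp : τ <+: σ) : LibWord τ :=
  fun _ _ _ _ _ _ _ _ _ _ h' => h _ _ _ _ _ _ _ _ _ _ (h'.trans hp)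

/-- The value of a variable after a word is the variable itself, or the value given by some
assignment to it along the word. -/
lemma hexec_value (σ : List Letter) (v : ℕ) :
    hexec σ v = Trm.var v ∨
    ∃ σ' f l args, σ' ++ [Letter.asn v f l args] <+: σ ∧
      hexec σ v = hexec (σ' ++ [Letter.asn v f l args]) v ∧
      hexec σ v = Trm.app f (args.map (hexec σ')) := by
  rcases run_value σ v with h | ⟨σ', f, l, args, hp, h⟩
  · exact Or.inl (h eSt)
  · refine Or.inr ⟨σ', f, l, args, hp, ?_, h eSt⟩
    change run eSt σ v = run eSt _ v
    rw [h, run_snoc_asn, Function.update_self]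

lemma LibWord.injective {σ : List Letter} (h : LibWord σ) : Function.Injective (hexec σ) := by
  -- liberality, for two assignments given by the prefixes of `σ` that end in them
  have key : ∀ σ₁ v f l args σ₂ w g m brgs,
      σ₂ ++ [Letter.asn w g m brgs] <+: σ → σ₁ ++ [Letter.asn v f l args] <+: σ₂ →
      hexec (σ₁ ++ [Letter.asn v f l args]) v ≠ hexec (σ₂ ++ [Letter.asn w g m brgs]) w := by
    rintro σ₁ v f l args σ₂ w g m brgs hp ⟨ν, rfl⟩
    have := h σ₁ ν v f l args w g m brgs (by simpa using hp)
    simpa using this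
  intro v w hvw
  rcases hexec_value σ v with h0 | ⟨σ₁, f, l, args, hp, h1, h2⟩ <;>
  rcases hexec_value σ w with h0' | ⟨σ₂, g, m, brgs, hp', h1', h2'⟩
  · rw [h0, h0'] at hvw
    exact Trm.var.inj hvw
  · rw [h0, h2'] at hvw
    cases hvw
  · rw [h0', h2] at hvw
    cases hvw
  · rw [h1, h1'] at hvw
    rcases List.prefix_or_prefix_of_prefix hp hp' with hh | hh <;>
      rcases List.prefix_concat_iff.1 hh with he | he
    · have := (List.append_inj' he rfl).2
      simp at this
      exact this.1
    · exact absurd hvw (key _ _ _ _ _ _ _ _ _ _ hp' he)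
    · have := (List.append_inj' he rfl).2
      simp at this
      exact this.1.symm
    · exact absurd hvw.symm (key _ _ _ _ _ _ _ _ _ _ hp he)

lemma LibWord.freshOver {μ ρ : List Letter} {L : Letter} (h : LibWord (μ ++ L :: ρ))
    (hL : hexec (μ ++ [L]) = hexec μ) : FreshOver (hexec μ) ρ := by
  rintro ρ' y f l args v ⟨t, rfl⟩ he
  rcases hexec_value μ v with h0 | ⟨σ₁, g, m, brgs, ⟨ν, rfl⟩, h1, h2⟩
  · rw [h0, run_snoc_asn, Function.update_self] at he
    cases he
  · rw [h1, ← hL, ← hexec_append] at he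
    refine h σ₁ (ν ++ L :: ρ') v g m brgs y f l args ⟨t, by simp⟩ ?_
    rw [he]
    simp

lemma LibWord.freshOver_prd {μ ρ : List Letter} {p l : ℕ} {args : List ℕ} {b : Bool}
    (h : LibWord (μ ++ Letter.prd p l args b :: ρ)) : FreshOver (hexec μ) ρ :=
  h.freshOver (hexec_append_prd μ [] p l args b)

/-! ### Transplanting the tails -/

/-- The predicate term `q(ts)` is evaluated along `σ`, executed from `e`. -/
def Evaluated (σ : List Letter) (q : ℕ) (ts : List Trm) : Prop :=
  ∃ τ m a b, τ ++ [Letter.prd q m a b] <+: σ ∧ a.map (hexec τ) = ts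

lemma hAgrees_iff {i : HInterp} {σ : List Letter} :
    Agrees (herb i) eSt σ ↔ ∀ τ q m a b, τ ++ [Letter.prd q m a b] <+: σ →
      i q (a.map (hexec τ)) = b := by
  simp only [Agrees, execP_herb]
  rfl

/-- A position in `μ ++ L :: ρ` lies in `μ`, is that of `L`, or lies in `ρ`. -/
lemma prefix_split {τ μ ρ : List Letter} {K L : Letter} (h : τ ++ [K] <+: μ ++ L :: ρ) :
    τ ++ [K] <+: μ ∨ (τ = μ ∧ K = L) ∨ ∃ ρ', τ = μ ++ L :: ρ' ∧ ρ' ++ [K] <+: ρ := by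
  obtain ⟨t, ht⟩ := h
  rw [List.append_assoc, List.singleton_append] at ht
  rcases append_cons_split ht with ⟨c, rfl, -⟩ | ⟨c, rfl, hc⟩
  · exact Or.inl ⟨c, by simp⟩
  · cases c with
    | nil =>
      simp only [List.nil_append, List.cons.injEq] at hc
      exact Or.inr (Or.inl ⟨by simp, hc.1.symm⟩)
    | cons b c =>
      simp only [List.cons_append, List.cons.injEq] at hc
      obtain ⟨rfl, rfl⟩ := hc
      exact Or.inr (Or.inr ⟨c, rfl, t, by simp⟩)

/-- Any word leading to `p^(l)` may serve as the head of a couple with the given tails. -/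
lemma change_head {S : Schema} (hW : WellLabelled S) (hF : Free S) (hL : Liberal S) {p l u : ℕ}
    {i j : HInterp} {head : List Letter} {args : List ℕ} {ρt ρf : List Letter}
    (hI : LPUCoupleData S p l u i j head args ρt ρf)
    {μ ρ : List Letter} {args' : List ℕ} {Z : Bool}
    (hμ : μ ++ Letter.prd p l args' Z :: ρ ∈ Paths S) :
    ∃ i' j' : HInterp, LPUCoupleData S p l u i' j' μ args' ρt ρf := by
  classical
  obtain ⟨⟨-, hij⟩, ⟨ht, hti⟩, ⟨hf, hfj⟩, hu⟩ := hI
  obtain ⟨rfl, ht'⟩ := paths_exchange (hW _) ht hμ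
  obtain ⟨-, hf'⟩ := paths_exchange (hW _) hf hμ
  have lt := libWord_of_path hF hL ht
  have lf := libWord_of_path hF hL hf
  have lt' := libWord_of_path hF hL ht'
  have lf' := libWord_of_path hF hL hf'
  have ft := lt.freshOver_prd
  have ff := lf.freshOver_prd
  have ft' := lt'.freshOver_prd
  have ff' := lf'.freshOver_prd
  have inj := (lt.mono (List.prefix_append _ _)).injective
  have inj' := (lt'.mono (List.prefix_append _ _)).injective
  rw [hAgrees_iff] at hti hfj
  obtain ⟨i₁, hi₁⟩ := hF _ ⟨_, List.prefix_rfl, ht'⟩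
  obtain ⟨j₁, hj₁⟩ := hF _ ⟨_, List.prefix_rfl, hf'⟩
  rw [hAgrees, hAgrees_iff] at hi₁ hj₁
  set πt := μ ++ Letter.prd p l args' true :: ρt with hπt
  set πf := μ ++ Letter.prd p l args' false :: ρf with hπf
  have pt : μ ++ [Letter.prd p l args' true] <+: πt := ⟨ρt, by simp [hπt]⟩
  have pf : μ ++ [Letter.prd p l args' false] <+: πf := ⟨ρf, by simp [hπf]⟩
  have μt : μ <+: πt := List.prefix_append _ _
  have μf : μ <+: πf := List.prefix_append _ _
  -- `i'` follows `πt` wherever `πt` decides, and `πf` elsewhere; `j'` flips the diverging term only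
  let i' : HInterp := fun q ts => if Evaluated πt q ts then i₁ q ts else j₁ q ts
  let j' : HInterp := fun q ts => if (q, ts) = (p, args'.map (hexec μ)) then false else i' q ts
  have hi' : ∀ τ q m a b, τ ++ [Letter.prd q m a b] <+: πt → i' q (a.map (hexec τ)) = b := by
    intro τ q m a b h
    have : Evaluated πt q (a.map (hexec τ)) := ⟨τ, m, a, b, h, rfl⟩
    simp only [i', if_pos this]
    exact hi₁ _ _ _ _ _ h
  refine ⟨i', j', ⟨?_, ?_⟩, ⟨ht', hAgrees_iff.2 hi'⟩, ⟨hf', hAgrees_iff.2 ?_⟩, ?_⟩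
  · rw [hi' _ _ _ _ _ pt]
    simp [j']
  · intro q ss hne
    simp only [j', if_neg hne]
  · intro τ q m a b h
    have hb := hj₁ _ _ _ _ _ h
    by_cases hdiv : (q, a.map (hexec τ)) = (p, args'.map (hexec μ))
    · simp only [j', if_pos hdiv]
      simp only [Prod.mk.injEq] at hdiv
      rw [← hb, hdiv.1, hdiv.2]
      exact (hj₁ _ _ _ _ _ pf).symm
    · simp only [j', if_neg hdiv, i']
      split_ifs with hev
      swap
      · exact hb
      obtain ⟨τ', m', a', b', h', hts⟩ := hev
      rw [← hts, hi₁ _ _ _ _ _ h']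
      rcases prefix_split h' with h1 | ⟨rfl, hK⟩ | ⟨ρ₁, rfl, h1⟩
      · rw [← hb, ← hts, hj₁ _ _ _ _ _ (h1.trans μf)]
      · simp only [Letter.prd.injEq] at hK
        exact absurd (by rw [← hts, hK.1, hK.2.2.1]) hdiv
      rcases prefix_split h with h2 | ⟨rfl, hK⟩ | ⟨ρ₂, rfl, h2⟩
      · rw [← hi₁ _ _ _ _ _ h', hts, hi₁ _ _ _ _ _ (h2.trans μt)]
      · simp only [Letter.prd.injEq] at hK
        exact absurd (by rw [hK.1, hK.2.2.1]) hdiv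
      rw [hexec_append_prd] at hts hdiv
      rw [hexec_append_prd] at hts
      have q1 : ρ₁ <+: ρt := (List.prefix_append _ _).trans h1
      have q2 : ρ₂ <+: ρf := (List.prefix_append _ _).trans h2
      -- the same coincidence of predicate terms occurs on the two tails after `head`
      have hts0 : a'.map (run (hexec head) ρ₁) = a.map (run (hexec head) ρ₂) :=
        map_eq_map_of_imp (fun x y => run_eq_transfer inj' _ ρ₁ ρ₂ le_rfl (ft'.mono q1)
          (ff'.mono q2) x y) hts
      have e1 := hti (head ++ Letter.prd p l args' true :: ρ₁) q m' a' b' (by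
        obtain ⟨t, rfl⟩ := h1
        exact ⟨t, by simp⟩)
      have e2 := hfj (head ++ Letter.prd p l args' false :: ρ₂) q m a b (by
        obtain ⟨t, rfl⟩ := h2
        exact ⟨t, by simp⟩)
      rw [hexec_append_prd] at e1 e2
      rw [← e1, ← e2, hts0]
      refine hij _ _ fun heq => hdiv ?_
      simp only [Prod.mk.injEq] at heq ⊢
      refine ⟨heq.1, ?_⟩
      exact map_eq_map_of_imp (g := hexec head) (fun x y => run_eq_transfer (d' := hexec μ) inj _ ρ₂ []
        le_rfl (ff.mono q2) (ff.mono List.nil_prefix) x y) heq.2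
  · intro he
    rw [hexec_append_prd, hexec_append_prd] at he
    rw [hexec_append_prd, hexec_append_prd] at hu
    exact hu (run_eq_transfer inj' _ ρt ρf le_rfl ft' ff' u u he)

/-- Lemma 14 / change.prefix.lem: in a free liberal schema, the
head of a `p^(l)u`-couple may be replaced by any prefix leading to `p^(l)`
while keeping the same pair of tails; in particular, if there is a
`p^(l)u`-couple and an `F p^(l)`-path-segment, then there is an
`F p^(l) u`-couple. -/
theorem change_head_of_couple (S : Schema) (hW : WellLabelled S)
    (hF : Free S) (hL : Liberal S) (p l u : ℕ) :
    (∀ (i j : HInterp) (head : List Letter) (args : List ℕ) (ρt ρf : List Letter),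
      LPUCoupleData S p l u i j head args ρt ρf →
      ∀ (μ : List Letter) (args' : List ℕ),
        μ ++ [Letter.prd p l args' true] ∈ PrePaths S →
        ∃ (i' j' : HInterp) (ρt' ρf' : List Letter),
          LPUCoupleData S p l u i' j' μ args' ρt' ρf' ∧
          ({ρt', ρf'} : Set (List Letter)) = {ρt, ρf}) ∧
    (∀ (i j : HInterp) (head : List Letter) (args : List ℕ) (ρt ρf : List Letter),
      LPUCoupleData S p l u i j head args ρt ρf →
      ∀ (F : List ℕ) (σ : List Letter) (args₂ : List ℕ) (Z : Bool),
        PathSegment S (σ ++ [Letter.prd p l args₂ Z]) →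
        (∃ w ∈ args₂, IsFTrm F (hexec σ w)) →
        ∃ (i' j' : HInterp) (head' : List Letter) (args' : List ℕ)
          (ρt' ρf' : List Letter),
          LPUCoupleData S p l u i' j' head' args' ρt' ρf' ∧
          ∃ t ∈ args'.map (hexec head'), IsFTrm F t) := by
  constructor
  · rintro i j head args ρt ρf hI μ args' ⟨_, ⟨ρ, rfl⟩, hμ⟩
    obtain ⟨i', j', h⟩ := change_head hW hF hL hI (μ := μ) (ρ := ρ) (args' := args') (Z := true)
      (by simpa using hμ)
    exact ⟨i', j', ρt, ρf, h, rfl⟩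
  · rintro i j head args ρt ρf hI F σ args₂ Z ⟨a, b, hab⟩ ⟨w, hw, hFt⟩
    obtain ⟨i', j', h⟩ := change_head hW hF hL hI (μ := a ++ σ) (ρ := b) (args' := args₂) (Z := Z)
      (by simpa using hab)
    refine ⟨i', j', a ++ σ, args₂, ρt, ρf, h, _, List.mem_map.2 ⟨w, hw, rfl⟩, ?_⟩
    rw [hexec_append]
    exact IsFTrm.run_of_eSt _ _ σ w F le_rfl hFt

end SchemaSlicing
end

section
/- Let v be a variable and let R, S₁, S₂ be predicate-free schemas such that: at least one of S₁, S₂ contains an assignment to v; each concatenation RS₁ and RS₂ is liberal; and for every function symbol f, if both S₁ and S₂ contain assignments with function symbol f, then no variable is assigned by an f-assignment in both S₁ and S₂. Then M[RS₁]_e(v) ≠ M[RS₂]_e(v). -/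
namespace SchemaSlicing

theorem pfExec_append (A B : PFS) : pfExec (A ++ B) = pfExecFrom (pfExec A) B := by
  simp [pfExec, pfExecFrom]

theorem pfExecFrom_of_not_assigned (v : ℕ) (C : PFS)
    (hC : ∀ f args, PFStmt.asn v f args ∉ C) (d : ℕ → Trm) : pfExecFrom d C v = d v := by
  induction C generalizing d with
  | nil => rfl
  | cons s C ih =>
    have hs : pfStep d s v = d v := by
      cases s with
      | skip => rfl
      | asn y f args =>
        have hne : v ≠ y := by
          rintro rfl
          exact hC f args (by simp)
        simp [pfStep, Function.update_of_ne hne]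
    have := ih (fun f args h => hC f args (List.mem_cons_of_mem _ h)) (pfStep d s)
    exact this.trans hs

/-- Splitting a schema at its last assignment to `v`. -/
theorem exists_last_assignment (v : ℕ) (U : PFS) (hU : ∃ f args, PFStmt.asn v f args ∈ U) :
    ∃ A f args C, U = A ++ PFStmt.asn v f args :: C ∧
      ∀ g brgs, PFStmt.asn v g brgs ∉ C := by
  induction U with
  | nil => simp at hU
  | cons s U ih =>
    by_cases h : ∃ f args, PFStmt.asn v f args ∈ U
    · obtain ⟨A, f, args, C, rfl, hC⟩ := ih h
      exact ⟨s :: A, f, args, C, rfl, hC⟩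
    · push Not at h
      obtain ⟨f, args, hf⟩ := hU
      rcases List.mem_cons.1 hf with rfl | hf
      · exact ⟨[], f, args, U, rfl, h⟩
      · exact absurd hf (h f args)

/-- The final value of `v` is the one given by its last assignment, and it is an application of
the function symbol of that assignment. -/
theorem pfExec_eq_of_last (v f : ℕ) (args : List ℕ) (A C : PFS)
    (hC : ∀ g brgs, PFStmt.asn v g brgs ∉ C) :
    pfExec (A ++ PFStmt.asn v f args :: C) v = pfExec (A ++ [PFStmt.asn v f args]) v ∧
      pfExec (A ++ PFStmt.asn v f args :: C) v = Trm.app f (args.map (pfExec A)) := by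
  have h : pfExec (A ++ [PFStmt.asn v f args]) v = Trm.app f (args.map (pfExec A)) := by
    rw [pfExec_append]
    simp [pfExecFrom, pfStep]
  have h' : pfExec (A ++ PFStmt.asn v f args :: C) v =
      pfExec (A ++ [PFStmt.asn v f args]) v := by
    rw [List.append_cons, pfExec_append]
    exact pfExecFrom_of_not_assigned v C hC _
  exact ⟨h', h'.trans h⟩

/-- By liberality, running `S` after `R` changes the value of every variable that `S` assigns. -/
theorem pfExec_append_ne (R S : PFS) (v : ℕ) (hS : ∃ f args, PFStmt.asn v f args ∈ S)
    (hlib : PFLiberal (R ++ S)) : pfExec (R ++ S) v ≠ pfExec R v := by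
  obtain ⟨A, f, args, C, rfl, hC⟩ := exists_last_assignment v S hS
  have hlast := pfExec_eq_of_last v f args (R ++ A) C hC
  rw [List.append_assoc] at hlast
  by_cases hR : ∃ f args, PFStmt.asn v f args ∈ R
  · obtain ⟨A', f', args', C', rfl, hC'⟩ := exists_last_assignment v R hR
    have hne := hlib A' v f' args' (C' ++ A) v f args C (by simp)
    rw [hlast.1, (pfExec_eq_of_last v f' args' A' C' hC').1]
    intro h
    apply hne
    rw [← h]
    simp
  · push Not at hR
    have hvar : pfExec R v = Trm.var v := pfExecFrom_of_not_assigned v R hR _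
    rw [hlast.2, hvar]
    exact Trm.noConfusion

/-- Proposition 19 / opp.parts.prop: if one of the predicate-free
schemas S₁, S₂ assigns to v, both `R S₁` and `R S₂` are liberal, and no variable
receives an assignment with the same function symbol in both S₁ and S₂, then
the final values of v after `R S₁` and after `R S₂` differ. -/
theorem opposite_parts_differ (R S₁ S₂ : PFS) (v : ℕ)
    (hv : (∃ f args, PFStmt.asn v f args ∈ S₁) ∨ (∃ f args, PFStmt.asn v f args ∈ S₂))
    (h₁ : PFLiberal (R ++ S₁)) (h₂ : PFLiberal (R ++ S₂))
    (hdisj : ∀ f y args args', PFStmt.asn y f args ∈ S₁ →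
      PFStmt.asn y f args' ∈ S₂ → False) :
    pfExec (R ++ S₁) v ≠ pfExec (R ++ S₂) v := by
  by_cases hS₁ : ∃ f args, PFStmt.asn v f args ∈ S₁
  · by_cases hS₂ : ∃ f args, PFStmt.asn v f args ∈ S₂
    · obtain ⟨A, f, args, C, rfl, hC⟩ := exists_last_assignment v S₁ hS₁
      obtain ⟨A', f', args', C', rfl, hC'⟩ := exists_last_assignment v S₂ hS₂
      rw [← List.append_assoc, ← List.append_assoc, (pfExec_eq_of_last v f args _ C hC).2,
        (pfExec_eq_of_last v f' args' _ C' hC').2]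
      intro h
      injection h with hf _
      subst hf
      exact hdisj f v args args' (by simp) (by simp)
    · push Not at hS₂
      rw [pfExec_append R S₂, pfExecFrom_of_not_assigned v S₂ hS₂]
      exact pfExec_append_ne R S₁ v hS₁ h₁
  · have hS₂ := hv.resolve_left hS₁
    push Not at hS₁
    rw [pfExec_append R S₁, pfExecFrom_of_not_assigned v S₁ hS₁]
    exact (pfExec_append_ne R S₂ v hS₂ h₂).symm

end SchemaSlicing
end

section
/- Let S₁, S₂, T be predicate-free schemas and let v, w be variables such that M[S₁]_e(v) ≠ M[S₂]_e(v), and suppose that M[T]_e(w) is a vG-term for some word G of function symbols. Then M[S₁T]_e(w) ≠ M[S₂T]_e(w). -/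
namespace SchemaSlicing

/-- Simultaneous substitution of the terms `d x` for the variables `x`. -/
def Trm.subst (d : ℕ → Trm) : Trm → Trm
  | .var x => d x
  | .app f ts => .app f (ts.map (Trm.subst d))

theorem pfExecFrom_subst (d : ℕ → Trm) (T : PFS) (s : ℕ → Trm) :
    pfExecFrom (fun x => (s x).subst d) T = fun x => (pfExecFrom s T x).subst d := by
  induction T generalizing s with
  | nil => rfl
  | cons a T ih =>
    have hstep : pfStep (fun x => (s x).subst d) a = fun x => (pfStep s a x).subst d := by
      cases a with
      | skip => rfl
      | asn y f args =>
        funext x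
        by_cases hx : x = y
        · subst hx
          simp [pfStep, Trm.subst]
        · simp [pfStep, hx]
    have := ih (pfStep s a)
    rw [← hstep] at this
    exact this

theorem pfExec_append_s10 (S T : PFS) (w : ℕ) :
    pfExec (S ++ T) w = (pfExec T w).subst (pfExec S) := by
  have h := congrFun (pfExecFrom_subst (pfExec S) T eSt) w
  have he : (fun x => (eSt x).subst (pfExec S)) = pfExec S := by
    funext x
    simp [eSt, Trm.subst]
  rw [he] at h
  simpa [pfExec, pfExecFrom] using h

theorem IsVFTrm.subst_inj {v : ℕ} {G : List ℕ} {t : Trm} (ht : IsVFTrm v G t)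
    {d₁ d₂ : ℕ → Trm} (h : t.subst d₁ = t.subst d₂) : d₁ v = d₂ v := by
  induction ht with
  | base => simpa [Trm.subst] using h
  | step g hmem _ ih =>
    simp only [Trm.subst, Trm.app.injEq, true_and] at h
    exact ih (List.map_inj_left.mp h _ hmem)

/-- Proposition 23 / change.term.prop: if the final values of v
after the predicate-free schemas S₁ and S₂ differ and the final value of w
after T is a vG-term, then the final values of w after S₁T and S₂T differ. -/
theorem vG_term_transmits_difference (S₁ S₂ T : PFS) (v w : ℕ)
    (h : pfExec S₁ v ≠ pfExec S₂ v)
    (hT : ∃ G : List ℕ, IsVFTrm v G (pfExec T w)) :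
    pfExec (S₁ ++ T) w ≠ pfExec (S₂ ++ T) w := by
  obtain ⟨G, hG⟩ := hT
  rw [pfExec_append_s10, pfExec_append_s10]
  exact fun heq => h (hG.subst_inj heq)

end SchemaSlicing
end
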